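/- For every 0 ≤ q ≤ n and all f₀, f₁, …, f_{q+1} ∈ A, the restriction of Φ^{−q}(f₀ ⊗ f₁ ⊗ … ⊗ f_{q+1}) to the diagonal is Φ^{−q}(f₀ ⊗ f₁ ⊗ … ⊗ f_{q+1})(z, z) = (1/q!) f₀(z) f_{q+1}(z) · (Σ_j (∂f₁/∂z^j)(z) e^j) ∧ … ∧ (Σ_j (∂f_q/∂z^j)(z) e^j); under the identification of K^{−q} restricted to the diagonal with holomorphic q-forms (e^j ↦ dz^j), this reads (1/q!) f₀ f_{q+1} df₁ ∧ … ∧ df_q, the Hochschild–Kostant–Rosenberg map. -/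

import Mathlib

/-!
Setting: `n ≥ 1`, `U ⊆ ℂⁿ` a nonempty convex open set.  Points of `U × U` are
written `p = (z, ζ)` with `z = p.1`, `ζ = p.2`.  For `0 ≤ q ≤ n`,
`K^{-q} = Λ^q(ℂⁿ) ⊗ O(U×U)` is encoded by the coefficients of its elements on
the basis `e^I`, where the strictly increasing multi-indices
`I = (i₁ < … < i_q)` are encoded as finsets `I ⊆ Fin n` of cardinality `q`.
-/

open scoped BigOperators

namespace TwistedKoszul

variable (n : ℕ)

/-- Points of `ℂⁿ × ℂⁿ`. -/
abbrev Pt (n : ℕ) := (Fin n → ℂ) × (Fin n → ℂ)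

/-- A family of coefficients, indexed by the basis vectors `e^I` of the
exterior algebra `Λ^•(ℂⁿ)` (strictly increasing multi-indices `I`, encoded as
finsets).  An element of `K^{-q}` is such a family supported on finsets of
cardinality `q`, with holomorphic coefficients (see `MemK`). -/
abbrev Coeff (n : ℕ) := Finset (Fin n) → Pt n → ℂ

/-- The sign `(-1)^{#{i ∈ I | i < j}}`, so that `e^j ∧ e^I = sgn j I • e^{I ∪ {j}}`
for `j ∉ I`. -/
noncomputable def sgn (j : Fin n) (I : Finset (Fin n)) : ℂ :=
  (-1 : ℂ) ^ (I.filter (fun i => i < j)).card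

/-- The holomorphic partial derivative `∂f/∂z^j` in the `j`-th coordinate of
the first factor. -/
noncomputable def pd (j : Fin n) (f : Pt n → ℂ) (p : Pt n) : ℂ :=
  fderiv ℂ f p (Pi.single j 1, 0)

/-- The Koszul differential `d_K : K^{-q} → K^{-q+1}`: contraction with
`Σ_i (z^i - ζ^i) ě^i`, i.e. `d_K(f e^I) = Σ_r (-1)^{r-1} (z^{i_r} - ζ^{i_r}) f e^{I_r}`. -/
noncomputable def dK (ω : Coeff n) : Coeff n := fun J p =>
  ∑ j ∈ Jᶜ, sgn n j J * ((p.1 j - p.2 j) * ω (insert j J) p)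

/-- The homotopy operator `P : K^{-q} → K^{-q-1}`:
`P(f e^I) = Σ_j (∫₀¹ t^{|I|} (∂f/∂z^j)(ζ + t(z - ζ), ζ) dt) e^j ∧ e^I`. -/
noncomputable def P (ω : Coeff n) : Coeff n := fun J p =>
  ∑ j ∈ J, sgn n j (J.erase j) *
    ∫ t in (0:ℝ)..1, (t : ℂ) ^ (J.card - 1) *
      pd n j (ω (J.erase j)) (p.2 + t • (p.1 - p.2), p.2)

/-- The operator `res`: zero on `K^{-q}` for `q ≥ 1`, and
`res(f)(z, ζ) = f(ζ, ζ)` for `f ∈ K^0`. -/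
noncomputable def res (ω : Coeff n) : Coeff n := fun J p =>
  if J = ∅ then ω ∅ (p.2, p.2) else 0

/-- The element of `K^0 = O(U×U)` determined by a single function. -/
noncomputable def ofFun (f : Pt n → ℂ) : Coeff n := fun J p => if J = ∅ then f p else 0

/-- `ω` is an element of `K^{-q}` over `U × U`: it is supported on
multi-indices of length `q` and its coefficients are holomorphic on `U × U`. -/
noncomputable def MemK (U : Set (Fin n → ℂ)) (q : ℕ) (ω : Coeff n) : Prop :=
  (∀ I : Finset (Fin n), I.card ≠ q → ω I = 0) ∧
  ∀ I : Finset (Fin n), DifferentiableOn ℂ (ω I) (U ×ˢ U)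

end TwistedKoszul

namespace TwistedKoszul

/-- The `i`-th face of the bar differential: merge the `i`-th and `(i+1)`-st
entries of a tensor `g₀ ⊗ … ⊗ g_m`, i.e.
`g₀ ⊗ … ⊗ g_i g_{i+1} ⊗ … ⊗ g_m`.  The bar differential is
`∂(g) = Σ_{i=0}^{m-1} (-1)^i merge g i`. -/
def merge {A : Type*} [Mul A] {m : ℕ} (g : Fin (m + 1) → A) (i : Fin m) :
    Fin m → A := fun k =>
  if (k : ℕ) < (i : ℕ) then g k.castSucc
  else if k = i then g k.castSucc * g k.succ
  else g k.succ

/-- Replace the first and last entries of a tensor by `1`: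
`f₀ ⊗ f₁ ⊗ … ⊗ f_q ⊗ f_{q+1} ↦ 1 ⊗ f₁ ⊗ … ⊗ f_q ⊗ 1`. -/
def bord {n m : ℕ} (f : Fin (m + 2) → ((Fin n → ℂ) → ℂ)) :
    Fin (m + 2) → ((Fin n → ℂ) → ℂ) := fun k =>
  if k = 0 then 1 else if k = Fin.last (m + 1) then 1 else f k

variable (n : ℕ)

/-- The chain map `Φ^{-q} : B^{-q} = A^{⊗(q+2)} → K^{-q}` from the bar complex
of `A = O(U)` to the Koszul complex, defined on pure tensors by
`Φ^0(f₀ ⊗ f₁)(z, ζ) = f₀(z) f₁(ζ)` and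
`Φ^{-q}(f₀ ⊗ … ⊗ f_{q+1}) = f₀(z) f_{q+1}(ζ) · P(Φ^{-(q-1)}(∂(1 ⊗ f₁ ⊗ … ⊗ f_q ⊗ 1)))`. -/
noncomputable def Phi : (q : ℕ) → (Fin (q + 2) → ((Fin n → ℂ) → ℂ)) → Coeff n
  | 0, f => ofFun n (fun p => f 0 p.1 * f 1 p.2)
  | q + 1, f => fun J p =>
      f 0 p.1 * f (Fin.last (q + 2)) p.2 *
        P n (fun J' p' => ∑ i : Fin (q + 2), (-1 : ℂ) ^ (i : ℕ) *
          Phi q (merge (bord f) i) J' p') J p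

end TwistedKoszul

namespace TwistedKoszul

/-- The holomorphic partial derivative `∂g/∂z^j` of a function on `ℂⁿ`. -/
noncomputable def pdU (n : ℕ) (j : Fin n) (g : (Fin n → ℂ) → ℂ)
    (z : Fin n → ℂ) : ℂ :=
  fderiv ℂ g z (Pi.single j 1)

open Metric Set Filter Topology MeasureTheory in
theorem cauchy_fderiv {E : Type*} [NormedAddCommGroup E] [NormedSpace ℂ E]
    {f : E → ℂ} {x : E} {r M : ℝ} (hr : 0 < r)
    (hf : ∀ y ∈ closedBall x r, DifferentiableAt ℂ f y) (hM : ∀ y ∈ closedBall x r, ‖f y‖ ≤ M) :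
    ‖fderiv ℂ f x‖ ≤ M / r := by
  have hM0 : 0 ≤ M := (norm_nonneg _).trans (hM x (mem_closedBall_self hr.le))
  refine ContinuousLinearMap.opNorm_le_of_unit_norm (by positivity) fun v hv => ?_
  have hline : ∀ w : ℂ, HasDerivAt (fun w : ℂ => x + w • v) v w := fun w => by
    simpa using ((hasDerivAt_id w).smul_const v).const_add x
  have hmem : ∀ w ∈ closedBall (0:ℂ) r, x + w • v ∈ closedBall x r := fun w hw => by
    simpa [norm_smul, hv] using hw
  have hd : ∀ w ∈ closedBall (0:ℂ) r,
      HasDerivAt (fun w : ℂ => f (x + w • v)) (fderiv ℂ f (x + w • v) v) w := fun w hw =>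
    (hf _ (hmem w hw)).hasFDerivAt.comp_hasDerivAt w (hline w)
  have h0 := (hd 0 (mem_closedBall_self hr.le)).deriv
  simp only [zero_smul, add_zero] at h0
  rw [← h0]
  apply Complex.norm_deriv_le_of_forall_mem_sphere_norm_le hr
  · apply DifferentiableOn.diffContOnCl
    rw [closure_ball _ hr.ne']
    exact fun w hw => (hd w hw).differentiableAt.differentiableWithinAt
  · exact fun w hw => hM _ (hmem w (sphere_subset_closedBall hw))

open Metric Set Filter Topology MeasureTheory in
theorem param_int {E : Type*} [NormedAddCommGroup E] [NormedSpace ℂ E] [FiniteDimensional ℂ E]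
    {V : Set E} (hV : IsOpen V) {a b : ℝ} (hab : a ≤ b) (G : ℝ → E → ℂ)
    (hc : ContinuousOn (Function.uncurry G) (Icc a b ×ˢ V))
    (hd : ∀ t ∈ Icc a b, DifferentiableOn ℂ (G t) V) {x : E} (hx : x ∈ V) :
    HasFDerivAt (fun x => ∫ t in a..b, G t x) (∫ t in a..b, fderiv ℂ (G t) x) x ∧
    IntervalIntegrable (fun t => fderiv ℂ (G t) x) volume a b := by
  have : ProperSpace E := FiniteDimensional.proper ℂ E
  obtain ⟨R, hR, hRV⟩ := nhds_basis_closedBall.mem_iff.1 (hV.mem_nhds hx)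
  set r := R / 2 with hr
  have hr0 : 0 < r := by positivity
  have hsub : ∀ y ∈ closedBall x r, closedBall y r ⊆ closedBall x R := fun y hy =>
    closedBall_subset_closedBall' (by rw [mem_closedBall] at hy; linarith)
  have hcK : ContinuousOn (Function.uncurry G) (Icc a b ×ˢ closedBall x R) :=
    hc.mono (prod_mono le_rfl hRV)
  obtain ⟨M, hM⟩ := (isCompact_Icc.prod (isCompact_closedBall x R)).exists_bound_of_continuousOn hcK
  have hdiff : ∀ t ∈ Icc a b, ∀ y ∈ closedBall x R, DifferentiableAt ℂ (G t) y := fun t ht y hy =>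
    (hd t ht).differentiableAt (hV.mem_nhds (hRV hy))
  have hcont1 : ∀ y ∈ V, ContinuousOn (fun t => G t y) (Icc a b) := fun y hy =>
    hc.comp (f := fun t => (t, y)) (by fun_prop) (fun t ht => ⟨ht, hy⟩)
  have hcont2 : ContinuousOn (fun t => fderiv ℂ (G t) x) (Icc a b) := by
    intro s hs
    refine Metric.continuousWithinAt_iff'.2 fun ε hε => ?_
    obtain ⟨v, hv, h⟩ := (isCompact_closedBall x R).mem_uniformity_of_prod hcK hs
      (dist_mem_uniformity (show 0 < ε * r / 2 by positivity))
    filter_upwards [hv, self_mem_nhdsWithin] with t ht ht'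
    have hxR : x ∈ closedBall x R := mem_closedBall_self hR.le
    have hxr : x ∈ closedBall x r := mem_closedBall_self hr0.le
    rw [dist_eq_norm, ← fderiv_sub (hdiff t ht' x hxR) (hdiff s hs x hxR)]
    refine (cauchy_fderiv (M := ε * r / 2) hr0 (fun y hy => ?_) (fun y hy => ?_)).trans_lt ?_
    · exact (hdiff t ht' y (hsub x hxr hy)).sub (hdiff s hs y (hsub x hxr hy))
    · have := h t ht y (hsub x hxr hy)
      simp only [mem_ofPred_eq, dist_eq_norm] at this
      exact this.le
    · rw [div_lt_iff₀ hr0]; nlinarith [mul_pos hε hr0]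
  have hIoc : uIoc a b ⊆ Icc a b := by rw [uIoc_of_le hab]; exact Ioc_subset_Icc_self
  have hms1 : ∀ y ∈ V, IntervalIntegrable (fun t => G t y) volume a b := fun y hy =>
    ContinuousOn.intervalIntegrable (by rw [uIcc_of_le hab]; exact hcont1 y hy)
  have hms2 : IntervalIntegrable (fun t => fderiv ℂ (G t) x) volume a b :=
    ContinuousOn.intervalIntegrable (by rwa [uIcc_of_le hab])
  refine ⟨?_, hms2⟩
  apply intervalIntegral.hasFDerivAt_integral_of_dominated_of_fderiv_le
    (F := fun x t => G t x) (F' := fun x t => fderiv ℂ (G t) x) (bound := fun _ => M / r)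
    (closedBall_mem_nhds x hr0)
  · filter_upwards [hV.mem_nhds hx] with y hy
    exact (hms1 y hy).def'.aestronglyMeasurable
  · exact hms1 x hx
  · exact hms2.def'.aestronglyMeasurable
  · refine Eventually.of_forall fun t ht y hy => cauchy_fderiv hr0 (fun u hu => ?_) (fun u hu => ?_)
    · exact hdiff t (hIoc ht) u (hsub y hy hu)
    · exact hM (t, u) ⟨hIoc ht, hsub y hy hu⟩
  · simp
  · exact Eventually.of_forall fun t ht y hy => (hdiff t (hIoc ht) y
      (closedBall_subset_closedBall (by linarith) hy)).hasFDerivAt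

open Metric Set Filter Topology MeasureTheory in
theorem fderiv_apply_diff {E : Type*} [NormedAddCommGroup E] [NormedSpace ℂ E]
    [FiniteDimensional ℂ E]
    {V : Set E} (hV : IsOpen V) {f : E → ℂ} (hf : DifferentiableOn ℂ f V) (v : E) :
    DifferentiableOn ℂ (fun x => fderiv ℂ f x v) V := by
  intro x hx
  obtain ⟨R, hR, hRV⟩ := Metric.isOpen_iff.1 hV x hx
  -- radius
  obtain ⟨r, hr0, hr⟩ : ∃ r : ℝ, 0 < r ∧ r * ‖v‖ < R / 2 := by
    refine ⟨R / 2 / (‖v‖ + 1), by positivity, ?_⟩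
    rw [div_mul_eq_mul_div, div_lt_iff₀ (by positivity)]
    nlinarith [norm_nonneg v]
  have hmem : ∀ y ∈ ball x (R/2), ∀ w ∈ closedBall (0:ℂ) r, y + w • v ∈ V := fun y hy w hw => by
    apply hRV
    rw [mem_ball, dist_eq_norm] at hy ⊢
    have : ‖w • v‖ ≤ r * ‖v‖ := by
      rw [norm_smul]; gcongr; simpa using hw
    calc ‖y + w • v - x‖ = ‖(y - x) + w • v‖ := by congr 1; abel
      _ ≤ _ := norm_add_le _ _
      _ < R := by linarith
  have hline : ∀ (y : E) (w : ℂ), HasDerivAt (fun w : ℂ => y + w • v) v w := fun y w => by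
    simpa using ((hasDerivAt_id w).smul_const v).const_add y
  let G : ℝ → E → ℂ := fun θ y =>
    deriv (circleMap 0 r) θ • (((circleMap 0 r θ - 0) ^ 2)⁻¹ • f (y + circleMap 0 r θ • v))
  have key : ∀ y ∈ ball x (R/2), fderiv ℂ f y v =
      (2 * Real.pi * Complex.I : ℂ)⁻¹ • ∫ θ in (0:ℝ)..2 * Real.pi, G θ y := by
    intro y hy
    have hO : IsOpen ((fun w : ℂ => y + w • v) ⁻¹' V) := hV.preimage (by fun_prop)
    have h1 := Complex.two_pi_I_inv_smul_circleIntegral_sub_sq_inv_smul_of_differentiable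
      hO (c := 0) (w₀ := 0) (R := r) (f := fun w => f (y + w • v)) (fun w hw => hmem y hy w hw)
      (fun w hw => by
        have : DifferentiableAt ℂ f (y + w • v) := hf.differentiableAt (hV.mem_nhds hw)
        exact (this.hasFDerivAt.comp_hasDerivAt w
          (hline y w)).differentiableAt.differentiableWithinAt)
      (mem_ball_self hr0)
    have h2 : DifferentiableAt ℂ f (y + (0:ℂ) • v) := hf.differentiableAt (hV.mem_nhds
      (hmem y hy 0 (mem_closedBall_self hr0.le)))
    have h3 := (h2.hasFDerivAt.comp_hasDerivAt 0 (hline y 0)).deriv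
    simp only [zero_smul, add_zero] at h3
    rw [← h3, show (f ∘ fun w : ℂ => y + w • v) = fun w => f (y + w • v) from rfl, ← h1]
    rfl
  have hxb : x ∈ ball x (R/2) := mem_ball_self (by positivity)
  have hcm : ∀ θ, circleMap 0 r θ ∈ closedBall (0:ℂ) r := fun θ => circleMap_mem_closedBall _ hr0.le _
  have hp := (param_int (V := ball x (R/2)) isOpen_ball (a := 0) (b := 2 * Real.pi)
    (by positivity) G ?_ ?_ hxb).1
  · have h4 : DifferentiableAt ℂ (fun y => (2 * Real.pi * Complex.I : ℂ)⁻¹ •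
      ∫ θ in (0:ℝ)..2 * Real.pi, G θ y) x := hp.differentiableAt.fun_const_smul _
    refine (h4.congr_of_eventuallyEq ?_).differentiableWithinAt
    filter_upwards [isOpen_ball.mem_nhds hxb] with y hy using key y hy
  · have hne : ∀ θ, (circleMap 0 r θ - 0) ^ 2 ≠ 0 := fun θ => by
      simp [circleMap_ne_center hr0.ne']
    have hfc : ContinuousOn (fun p : ℝ × E => f (p.2 + circleMap 0 r p.1 • v))
        (Icc 0 (2 * Real.pi) ×ˢ ball x (R/2)) := by
      refine hf.continuousOn.comp (f := fun p : ℝ × E => p.2 + circleMap 0 r p.1 • v) ?_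
        (fun p hp => hmem p.2 hp.2 _ (hcm _))
      have := (continuous_circleMap 0 r).comp (continuous_fst (X := ℝ) (Y := E))
      exact (continuous_snd.add (this.smul continuous_const)).continuousOn
    have hc' : Continuous fun p : ℝ × E => circleMap 0 r p.1 :=
      (continuous_circleMap 0 r).comp continuous_fst
    have e : Function.uncurry G = fun p : ℝ × E => (circleMap 0 r p.1 * Complex.I) •
      (((circleMap 0 r p.1 - 0) ^ 2)⁻¹ • f (p.2 + circleMap 0 r p.1 • v)) := by
      ext p; simp [G, Function.uncurry, deriv_circleMap]
    rw [e]
    refine (hc'.mul continuous_const).continuousOn.fun_smul (ContinuousOn.fun_smul ?_ hfc)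
    exact (Continuous.inv₀ ((hc'.sub continuous_const).pow 2) (fun p => hne p.1)).continuousOn
  · intro θ _ y hy
    have h2 : DifferentiableAt ℂ f (y + circleMap 0 r θ • v) := hf.differentiableAt (hV.mem_nhds
      (hmem y hy _ (hcm θ)))
    have : DifferentiableAt ℂ (fun y => f (y + circleMap 0 r θ • v)) y := 
      h2.comp y (f := fun y => y + circleMap 0 r θ • v) (by fun_prop)
    exact ((this.fun_const_smul _).fun_const_smul _).differentiableWithinAt

theorem contDiffOn_of_diff {E : Type*} [NormedAddCommGroup E] [NormedSpace ℂ E]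
    [FiniteDimensional ℂ E] {V : Set E} (hV : IsOpen V) (m : ℕ) :
    ∀ {f : E → ℂ}, DifferentiableOn ℂ f V → ContDiffOn ℂ m f V := by
  induction m with
  | zero => intro f hf; simpa using hf.continuousOn
  | succ m ih =>
    intro f hf
    push_cast
    rw [contDiffOn_succ_iff_fderiv_of_isOpen hV]
    refine ⟨hf, by simp, ?_⟩
    rw [contDiffOn_clm_apply]
    exact fun v => ih (fderiv_apply_diff hV hf v)

theorem fderiv_symm {E : Type*} [NormedAddCommGroup E] [NormedSpace ℂ E]
    [FiniteDimensional ℂ E] {V : Set E} (hV : IsOpen V) {f : E → ℂ}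
    (hf : DifferentiableOn ℂ f V) {x : E} (hx : x ∈ V) (u v : E) :
    fderiv ℂ (fun y => fderiv ℂ f y u) x v = fderiv ℂ (fun y => fderiv ℂ f y v) x u := by
  have h2 : ContDiffAt ℂ 2 f x := (contDiffOn_of_diff hV 2 hf).contDiffAt (hV.mem_nhds hx)
  have hs := h2.isSymmSndFDerivAt (by simp)
  have hd : DifferentiableAt ℂ (fderiv ℂ f) x :=
    (h2.fderiv_right (m := 1) (by norm_num)).differentiableAt (by norm_num)
  have : ∀ u v, fderiv ℂ (fun y => fderiv ℂ f y u) x v = fderiv ℂ (fderiv ℂ f) x v u := by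
    intro u v
    rw [fderiv_clm_apply hd (by fun_prop)]
    simp
  rw [this, this]
  exact hs.eq v u
theorem seg_mem {n : ℕ} {U : Set (Fin n → ℂ)} (hUconv : Convex ℝ U) {p : Pt n}
    (hp : p ∈ U ×ˢ U) {t : ℝ} (ht : t ∈ Set.Icc (0:ℝ) 1) :
    (p.2 + t • (p.1 - p.2), p.2) ∈ U ×ˢ U :=
  ⟨hUconv.add_smul_sub_mem hp.2 hp.1 ht, hp.2⟩

theorem int_pow (m : ℕ) : ∫ t in (0:ℝ)..1, (t:ℂ) ^ m = ((m:ℂ) + 1)⁻¹ := by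
  have : ∀ t : ℝ, (t:ℂ) ^ m = ((t ^ m : ℝ) : ℂ) := fun t => by push_cast; rfl
  simp_rw [this]
  rw [intervalIntegral.integral_ofReal, integral_pow]
  push_cast
  simp

noncomputable def segMap (n : ℕ) (t : ℝ) : Pt n →L[ℂ] Pt n :=
  let a : Pt n →L[ℂ] (Fin n → ℂ) := ContinuousLinearMap.fst ℂ _ _
  let b : Pt n →L[ℂ] (Fin n → ℂ) := ContinuousLinearMap.snd ℂ _ _
  (b + (t:ℂ) • (a - b)).prod b

theorem segMap_apply (n : ℕ) (t : ℝ) (p : Pt n) :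
    segMap n t p = (p.2 + t • (p.1 - p.2), p.2) := by
  simp [segMap]

theorem Pint {n : ℕ} {U : Set (Fin n → ℂ)} (hUopen : IsOpen U) (hUconv : Convex ℝ U)
    {g : Pt n → ℂ} (hg : DifferentiableOn ℂ g (U ×ˢ U)) (m : ℕ) :
    DifferentiableOn ℂ (fun p : Pt n => ∫ t in (0:ℝ)..1, (t:ℂ) ^ m *
      g (p.2 + t • (p.1 - p.2), p.2)) (U ×ˢ U) ∧
    ∀ z ∈ U, ∀ k, pd n k (fun p : Pt n => ∫ t in (0:ℝ)..1, (t:ℂ) ^ m *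
      g (p.2 + t • (p.1 - p.2), p.2)) (z, z) = ((m:ℂ) + 2)⁻¹ * pd n k g (z, z) := by
  have hO : IsOpen (U ×ˢ U) := hUopen.prod hUopen
  let G : ℝ → Pt n → ℂ := fun t p => (t:ℂ) ^ m * g (p.2 + t • (p.1 - p.2), p.2)
  have hder : ∀ t ∈ Set.Icc (0:ℝ) 1, ∀ p ∈ U ×ˢ U, HasFDerivAt (G t)
      ((t:ℂ) ^ m • (fderiv ℂ g (p.2 + t • (p.1 - p.2), p.2)).comp (segMap n t)) p := by
    intro t ht p hp
    have h1 : DifferentiableAt ℂ g (segMap n t p) := by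
      rw [segMap_apply]; exact hg.differentiableAt (hO.mem_nhds (seg_mem hUconv hp ht))
    have h2 := (h1.hasFDerivAt.comp p (segMap n t).hasFDerivAt).const_mul ((t:ℂ) ^ m)
    rw [segMap_apply] at h2
    refine h2.congr_of_eventuallyEq (Filter.Eventually.of_forall fun p => ?_)
    simp [G, segMap_apply]
  have hp := fun x (hx : x ∈ U ×ˢ U) => param_int hO zero_le_one G ?_
    (fun t ht p hp => (hder t ht p hp).differentiableAt.differentiableWithinAt) hx
  · refine ⟨fun x hx => (hp x hx).1.differentiableAt.differentiableWithinAt, fun z hz k => ?_⟩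
    have hzz : (z, z) ∈ U ×ˢ U := ⟨hz, hz⟩
    obtain ⟨h1, h2⟩ := hp (z, z) hzz
    unfold pd
    rw [h1.fderiv, ContinuousLinearMap.intervalIntegral_apply h2]
    have : ∀ t ∈ Set.uIcc (0:ℝ) 1, fderiv ℂ (G t) (z, z) (Pi.single k 1, 0) =
        (t:ℂ) ^ (m + 1) * fderiv ℂ g (z, z) (Pi.single k 1, 0) := by
      intro t ht
      rw [Set.uIcc_of_le zero_le_one] at ht
      rw [(hder t ht _ hzz).fderiv]
      have e : segMap n t (Pi.single k 1, 0) = (t:ℂ) • ((Pi.single k 1, 0) : Pt n) := by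
        simp [segMap_apply]
      simp only [sub_self, smul_zero, add_zero]
      rw [_root_.smul_apply, ContinuousLinearMap.comp_apply, e, map_smul]
      simp only [smul_eq_mul]
      ring
    rw [intervalIntegral.integral_congr this, intervalIntegral.integral_mul_const, int_pow]
    push_cast
    ring
  · have hc : ContinuousOn (fun x : ℝ × Pt n => g (x.2.2 + x.1 • (x.2.1 - x.2.2), x.2.2))
        (Set.Icc (0:ℝ) 1 ×ˢ (U ×ˢ U)) :=
      hg.continuousOn.comp (f := fun x : ℝ × Pt n => (x.2.2 + x.1 • (x.2.1 - x.2.2), x.2.2))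
        (by fun_prop) (fun x hx => seg_mem hUconv hx.2 hx.1)
    have hc2 : Continuous fun x : ℝ × Pt n => ((x.1 : ℝ) : ℂ) ^ m := by fun_prop
    exact hc2.continuousOn.mul hc

theorem pd_diff {n : ℕ} {U : Set (Fin n → ℂ)} (hUopen : IsOpen U)
    {g : Pt n → ℂ} (hg : DifferentiableOn ℂ g (U ×ˢ U)) (j : Fin n) :
    DifferentiableOn ℂ (pd n j g) (U ×ˢ U) :=
  fderiv_apply_diff (hUopen.prod hUopen) hg _

theorem pd_symm {n : ℕ} {U : Set (Fin n → ℂ)} (hUopen : IsOpen U)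
    {g : Pt n → ℂ} (hg : DifferentiableOn ℂ g (U ×ˢ U)) (j k : Fin n) {p : Pt n}
    (hp : p ∈ U ×ˢ U) : pd n k (pd n j g) p = pd n j (pd n k g) p :=
  fderiv_symm (hUopen.prod hUopen) hg hp _ _

theorem P_diff {n : ℕ} {U : Set (Fin n → ℂ)} (hUopen : IsOpen U) (hUconv : Convex ℝ U)
    {ω : Coeff n} (hω : ∀ I, DifferentiableOn ℂ (ω I) (U ×ˢ U)) (J : Finset (Fin n)) :
    DifferentiableOn ℂ (P n ω J) (U ×ˢ U) := by
  unfold P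
  refine DifferentiableOn.fun_sum fun j _ => DifferentiableOn.const_mul ?_ _
  exact (Pint hUopen hUconv (pd_diff hUopen (hω (J.erase j)) j) _).1

theorem P_diag {n : ℕ} (ω : Coeff n) (J : Finset (Fin n)) (z : Fin n → ℂ) :
    P n ω J (z, z) = (J.card : ℂ)⁻¹ * ∑ j ∈ J, sgn n j (J.erase j) *
      pd n j (ω (J.erase j)) (z, z) := by
  unfold P
  rw [Finset.mul_sum]
  refine Finset.sum_congr rfl fun j hj => ?_
  have hc : 1 ≤ J.card := Finset.card_pos.2 ⟨j, hj⟩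
  simp only [sub_self, smul_zero, add_zero]
  rw [intervalIntegral.integral_mul_const, int_pow]
  push_cast [hc]
  ring

theorem pd_P {n : ℕ} {U : Set (Fin n → ℂ)} (hUopen : IsOpen U) (hUconv : Convex ℝ U)
    {ω : Coeff n} (hω : ∀ I, DifferentiableOn ℂ (ω I) (U ×ˢ U)) (J : Finset (Fin n))
    {z : Fin n → ℂ} (hz : z ∈ U) (k : Fin n) :
    pd n k (P n ω J) (z, z) = (((J.card - 1 : ℕ) : ℂ) + 2)⁻¹ * ∑ j ∈ J, sgn n j (J.erase j) *
      pd n k (pd n j (ω (J.erase j))) (z, z) := by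
  have hO : IsOpen (U ×ˢ U) := hUopen.prod hUopen
  have hzz : (z, z) ∈ U ×ˢ U := ⟨hz, hz⟩
  have hI := fun j => Pint hUopen hUconv (pd_diff hUopen (hω (J.erase j)) j) (J.card - 1)
  have hd := fun j => (hI j).1.differentiableAt (hO.mem_nhds hzz)
  have h2 := fun j => (hI j).2 z hz k
  unfold pd at h2 ⊢
  unfold P
  rw [fderiv_fun_sum (fun j _ => (hd j).const_mul _), Finset.mul_sum]
  simp only [_root_.sum_apply]
  refine Finset.sum_congr rfl fun j hj => ?_
  rw [fderiv_const_mul (hd j)]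
  simp only [_root_.smul_apply, smul_eq_mul]
  erw [h2 j]
  ring

theorem sgn_anti {n : ℕ} (J : Finset (Fin n)) {j k : Fin n} (hj : j ∈ J) (hk : k ∈ J)
    (h : j ≠ k) :
    sgn n k (J.erase k) * sgn n j ((J.erase k).erase j) =
      - (sgn n j (J.erase j) * sgn n k ((J.erase j).erase k)) := by
  wlog hlt : j < k generalizing j k with H
  · rw [H hk hj h.symm (lt_of_le_of_ne (not_lt.1 hlt) h.symm), neg_neg]
  unfold sgn
  have e1 : (((J.erase k).erase j).filter (fun i => i < j)) = (J.erase j).filter (fun i => i < j) := by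
    ext i; simp only [Finset.mem_filter, Finset.mem_erase]
    constructor
    · tauto
    · rintro ⟨⟨a, b⟩, c⟩; exact ⟨⟨a, (c.trans hlt).ne, b⟩, c⟩
  have e2 : ((J.erase k).filter (fun i => i < k)) =
      insert j (((J.erase j).erase k).filter (fun i => i < k)) := by
    ext i; simp only [Finset.mem_filter, Finset.mem_erase, Finset.mem_insert]
    by_cases hij : i = j
    · subst hij; simp [hj, h, hlt]
    · simp [hij]
  rw [e1, e2, Finset.card_insert_of_notMem (by simp)]
  ring

theorem d_P {n : ℕ} {U : Set (Fin n → ℂ)} (hUopen : IsOpen U) (hUconv : Convex ℝ U)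
    {ω : Coeff n} (hω : ∀ I, DifferentiableOn ℂ (ω I) (U ×ˢ U)) (J : Finset (Fin n))
    {z : Fin n → ℂ} (hz : z ∈ U) :
    ∑ k ∈ J, sgn n k (J.erase k) * pd n k (P n ω (J.erase k)) (z, z) = 0 := by
  have hzz : (z, z) ∈ U ×ˢ U := ⟨hz, hz⟩
  set c : ℂ := (((J.card - 1 - 1 : ℕ) : ℂ) + 2)⁻¹
  let T : Fin n → Fin n → ℂ := fun k j => if j = k then 0 else
    c * ((sgn n k (J.erase k) * sgn n j ((J.erase k).erase j)) *
      pd n k (pd n j (ω ((J.erase k).erase j))) (z, z))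
  have h1 : ∑ k ∈ J, sgn n k (J.erase k) * pd n k (P n ω (J.erase k)) (z, z) =
      ∑ k ∈ J, ∑ j ∈ J, T k j := by
    refine Finset.sum_congr rfl fun k hk => ?_
    rw [pd_P hUopen hUconv hω _ hz, Finset.card_erase_of_mem hk,
      ← Finset.add_sum_erase J (T k) hk]
    simp only [T, if_true, zero_add, Finset.mul_sum]
    refine Finset.sum_congr rfl fun j hj => ?_
    rw [if_neg (Finset.ne_of_mem_erase hj)]
    ring
  have h2 : ∑ k ∈ J, ∑ j ∈ J, T k j = - ∑ k ∈ J, ∑ j ∈ J, T k j := by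
    conv_lhs => rw [Finset.sum_comm]
    simp only [← Finset.sum_neg_distrib]
    refine Finset.sum_congr rfl fun k hk => Finset.sum_congr rfl fun j hj => ?_
    simp only [T]
    by_cases h : j = k
    · simp [h]
    · rw [if_neg h, if_neg (Ne.symm h), sgn_anti J hj hk h, pd_symm hUopen (hω _) _ _ hzz,
        Finset.erase_right_comm]
      ring
  rw [h1]
  exact self_eq_neg.1 h2

theorem bord_diff {n m : ℕ} {U : Set (Fin n → ℂ)} {f : Fin (m + 2) → ((Fin n → ℂ) → ℂ)}
    (hf : ∀ k, DifferentiableOn ℂ (f k) U) (k) : DifferentiableOn ℂ (bord f k) U := by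
  unfold bord
  split_ifs
  · exact differentiableOn_const (1:ℂ)
  · exact differentiableOn_const (1:ℂ)
  · exact hf k

theorem merge_diff {n m : ℕ} {U : Set (Fin n → ℂ)} {f : Fin (m + 1) → ((Fin n → ℂ) → ℂ)}
    (hf : ∀ k, DifferentiableOn ℂ (f k) U) (i k) : DifferentiableOn ℂ (merge f i k) U := by
  unfold merge
  split_ifs
  · exact hf _
  · exact (hf _).mul (hf _)
  · exact hf _

theorem bord_zero {n m : ℕ} (f : Fin (m + 2) → ((Fin n → ℂ) → ℂ)) : bord f 0 = 1 := by
  simp [bord]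

theorem bord_last {n m : ℕ} (f : Fin (m + 2) → ((Fin n → ℂ) → ℂ)) :
    bord f (Fin.last (m + 1)) = 1 := by
  simp [bord]

theorem bord_bord {n m : ℕ} (f : Fin (m + 2) → ((Fin n → ℂ) → ℂ)) :
    bord (bord f) = bord f := by
  ext k; unfold bord; split_ifs <;> rfl

theorem bord_mid {n q : ℕ} (f : Fin (q + 2) → ((Fin n → ℂ) → ℂ)) (r : Fin q) :
    bord f r.succ.castSucc = f r.succ.castSucc := by
  unfold bord
  rw [if_neg, if_neg]
  · exact (Fin.castSucc_lt_last _).ne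
  · intro h; simpa using congrArg Fin.val h

theorem merge_zero_zero {n q : ℕ} (f : Fin (q + 3) → ((Fin n → ℂ) → ℂ)) :
    merge (bord f) 0 0 = f 1 := by
  have : bord f (Fin.succ 0) = f 1 := bord_mid f (0 : Fin (q + 1))
  simp only [merge]
  rw [this]
  simp [bord_zero]

theorem merge_pos_zero {n q : ℕ} (f : Fin (q + 3) → ((Fin n → ℂ) → ℂ)) (i : Fin (q + 2))
    (hi : i ≠ 0) : merge (bord f) i 0 = 1 := by
  have : 0 < (i : ℕ) := Fin.pos_iff_ne_zero.2 hi
  simp [merge, this, bord_zero]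

theorem merge_zero_last {n q : ℕ} (f : Fin (q + 3) → ((Fin n → ℂ) → ℂ)) :
    merge (bord f) 0 (Fin.last (q + 1)) = 1 := by
  simp [merge, bord_last]

theorem merge_zero_mid {n q : ℕ} (f : Fin (q + 3) → ((Fin n → ℂ) → ℂ)) (r : Fin q) :
    merge (bord f) 0 r.succ.castSucc = f r.succ.succ.castSucc := by
  have : bord f (r.succ.castSucc.succ) = f r.succ.succ.castSucc := bord_mid f r.succ
  simp only [merge]
  rw [this]
  have h : r.succ.castSucc ≠ 0 := by intro h; simpa using congrArg Fin.val h
  simp [h]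

theorem Phi_bord {n q : ℕ} (f : Fin (q + 2) → ((Fin n → ℂ) → ℂ)) (J : Finset (Fin n))
    (p : Pt n) :
    Phi n q f J p = f 0 p.1 * f (Fin.last (q + 1)) p.2 * Phi n q (bord f) J p := by
  cases q with
  | zero =>
    have : bord f 1 = 1 := bord_last f
    simp only [Phi, ofFun, bord_zero, this]
    by_cases h : J = ∅
    · simp [h]
    · simp [h]
  | succ q =>
    simp only [Phi, bord_bord, bord_zero, bord_last]
    simp

theorem Phi_diff {n : ℕ} {U : Set (Fin n → ℂ)} (hUopen : IsOpen U) (hUconv : Convex ℝ U)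
    (q : ℕ) : ∀ (f : Fin (q + 2) → ((Fin n → ℂ) → ℂ)), (∀ k, DifferentiableOn ℂ (f k) U) →
      ∀ J, DifferentiableOn ℂ (Phi n q f J) (U ×ˢ U) := by
  have h1 : ∀ g : (Fin n → ℂ) → ℂ, DifferentiableOn ℂ g U →
      DifferentiableOn ℂ (fun p : Pt n => g p.1) (U ×ˢ U) := fun g hg =>
    hg.comp differentiableOn_fst (fun p hp => hp.1)
  have h2 : ∀ g : (Fin n → ℂ) → ℂ, DifferentiableOn ℂ g U →
      DifferentiableOn ℂ (fun p : Pt n => g p.2) (U ×ˢ U) := fun g hg =>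
    hg.comp differentiableOn_snd (fun p hp => hp.2)
  induction q with
  | zero =>
    intro f hf J
    unfold Phi ofFun
    by_cases h : J = ∅
    · simp only [h, if_true]
      exact (h1 _ (hf 0)).mul (h2 _ (hf 1))
    · simp only [h, if_false]
      exact differentiableOn_const _
  | succ q ih =>
    intro f hf J
    unfold Phi
    refine ((h1 _ (hf 0)).mul (h2 _ (hf _))).mul (P_diff hUopen hUconv (fun I => ?_) J)
    exact DifferentiableOn.fun_sum fun i _ =>
      (ih _ (merge_diff (bord_diff hf) i) I).const_mul _

theorem d_Phi {n : ℕ} {U : Set (Fin n → ℂ)} (hUopen : IsOpen U) (hUconv : Convex ℝ U)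
    (q : ℕ) (f : Fin (q + 2) → ((Fin n → ℂ) → ℂ)) (hf : ∀ k, DifferentiableOn ℂ (f k) U)
    (J : Finset (Fin n)) {z : Fin n → ℂ} (hz : z ∈ U) :
    ∑ k ∈ J, sgn n k (J.erase k) * pd n k (Phi n q (bord f) (J.erase k)) (z, z) = 0 := by
  cases q with
  | zero =>
    refine Finset.sum_eq_zero fun k _ => ?_
    have : Phi n 0 (bord f) (J.erase k) = fun _ => if J.erase k = ∅ then 1 else 0 := by
      have : bord f 1 = 1 := bord_last f
      ext p
      simp only [Phi, ofFun, bord_zero, this]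
      simp
    rw [this]
    simp [pd]
  | succ q =>
    have : Phi n (q + 1) (bord f) = P n (fun J' p' => ∑ i : Fin (q + 2), (-1 : ℂ) ^ (i : ℕ) *
          Phi n q (merge (bord f) i) J' p') := by
      ext J p
      simp only [Phi, bord_bord, bord_zero, bord_last]
      simp
    rw [this]
    refine d_P hUopen hUconv (fun I => ?_) J hz
    exact DifferentiableOn.fun_sum fun i _ =>
      (Phi_diff hUopen hUconv q _ (merge_diff (bord_diff hf) i) I).const_mul _

theorem pd_Phi {n : ℕ} {U : Set (Fin n → ℂ)} (hUopen : IsOpen U) (hUconv : Convex ℝ U)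
    (q : ℕ) (g : Fin (q + 2) → ((Fin n → ℂ) → ℂ)) (hg : ∀ k, DifferentiableOn ℂ (g k) U)
    (K : Finset (Fin n)) {z : Fin n → ℂ} (hz : z ∈ U) (j : Fin n) :
    pd n j (Phi n q g K) (z, z) =
      pdU n j (g 0) z * g (Fin.last (q + 1)) z * Phi n q (bord g) K (z, z) +
      g 0 z * g (Fin.last (q + 1)) z * pd n j (Phi n q (bord g) K) (z, z) := by
  have hO : IsOpen (U ×ˢ U) := hUopen.prod hUopen
  have hzz : (z, z) ∈ U ×ˢ U := ⟨hz, hz⟩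
  have e : Phi n q g K = fun p => g 0 p.1 * g (Fin.last (q + 1)) p.2 * Phi n q (bord g) K p :=
    funext fun p => Phi_bord g K p
  have d0 : DifferentiableAt ℂ (g 0) (z, z).1 := (hg 0).differentiableAt (hUopen.mem_nhds hz)
  have d1 : DifferentiableAt ℂ (g (Fin.last (q + 1))) (z, z).2 :=
    (hg _).differentiableAt (hUopen.mem_nhds hz)
  have d2 : DifferentiableAt ℂ (Phi n q (bord g) K) (z, z) :=
    (Phi_diff hUopen hUconv q _ (bord_diff hg) K).differentiableAt (hO.mem_nhds hzz)
  have h0 : HasFDerivAt (fun p : Pt n => g 0 p.1) _ (z, z) := d0.hasFDerivAt.comp (z, z) hasFDerivAt_fst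
  have h1 : HasFDerivAt (fun p : Pt n => g (Fin.last (q + 1)) p.2) _ (z, z) :=
    d1.hasFDerivAt.comp (z, z) hasFDerivAt_snd
  have := ((h0.fun_mul h1).fun_mul d2.hasFDerivAt).fderiv
  unfold pd pdU
  rw [e, this]
  simp
  ring

theorem Phi_step {n : ℕ} {U : Set (Fin n → ℂ)} (hUopen : IsOpen U) (hUconv : Convex ℝ U)
    (q : ℕ) (f : Fin (q + 3) → ((Fin n → ℂ) → ℂ)) (hf : ∀ k, DifferentiableOn ℂ (f k) U)
    (J : Finset (Fin n)) {z : Fin n → ℂ} (hz : z ∈ U) :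
    Phi n (q + 1) f J (z, z) = f 0 z * f (Fin.last (q + 2)) z * ((J.card : ℂ)⁻¹ *
      ∑ j ∈ J, sgn n j (J.erase j) * (pdU n j (f 1) z *
        Phi n q (bord (merge (bord f) 0)) (J.erase j) (z, z))) := by
  have hO : IsOpen (U ×ˢ U) := hUopen.prod hUopen
  have hzz : (z, z) ∈ U ×ˢ U := ⟨hz, hz⟩
  have hm := fun i => merge_diff (bord_diff hf) i
  have hsum : ∀ j K, pd n j (fun p' => ∑ i : Fin (q + 2), (-1 : ℂ) ^ (i : ℕ) *
      Phi n q (merge (bord f) i) K p') (z, z) = ∑ i : Fin (q + 2), (-1 : ℂ) ^ (i : ℕ) *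
        pd n j (Phi n q (merge (bord f) i) K) (z, z) := by
    intro j K
    have hd := fun i => (Phi_diff hUopen hUconv q _ (hm i) K).differentiableAt (hO.mem_nhds hzz)
    unfold pd
    rw [fderiv_fun_sum (fun i _ => (hd i).const_mul _)]
    simp only [_root_.sum_apply]
    refine Finset.sum_congr rfl fun i _ => ?_
    rw [fderiv_const_mul (hd i)]
    rfl
  have hsum2 : ∀ j K, pd n j (fun p' => ∑ i : Fin (q + 2), (-1 : ℂ) ^ (i : ℕ) *
      Phi n q (merge (bord f) i) K p') (z, z) =
      pdU n j (f 1) z * Phi n q (bord (merge (bord f) 0)) K (z, z) +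
      ∑ i : Fin (q + 2), (-1 : ℂ) ^ (i : ℕ) * (merge (bord f) i 0 z *
        merge (bord f) i (Fin.last (q + 1)) z) *
        pd n j (Phi n q (bord (merge (bord f) i)) K) (z, z) := by
    intro j K
    rw [hsum]
    simp only [pd_Phi hUopen hUconv q _ (hm _) K hz j, mul_add, Finset.sum_add_distrib]
    congr 1
    · rw [Finset.sum_eq_single 0]
      · rw [merge_zero_zero, merge_zero_last]; simp
      · intro i _ hi
        rw [merge_pos_zero f i hi]
        have : pdU n j 1 z = 0 := by
          unfold pdU
          rw [show (1 : (Fin n → ℂ) → ℂ) = fun _ => 1 from rfl]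
          simp
        simp [this]
      · simp
    · refine Finset.sum_congr rfl fun i _ => by ring
  simp only [Phi]
  rw [P_diag]
  simp only [hsum2, mul_add, Finset.sum_add_distrib, Finset.mul_sum]
  have hz0 : ∀ i : Fin (q + 2), ∑ j ∈ J, sgn n j (J.erase j) * ((-1 : ℂ) ^ (i : ℕ) *
      (merge (bord f) i 0 z * merge (bord f) i (Fin.last (q + 1)) z) *
        pd n j (Phi n q (bord (merge (bord f) i)) (J.erase j)) (z, z)) = 0 := by
    intro i
    have := d_Phi hUopen hUconv q _ (hm i) J hz
    calc _ = ((-1 : ℂ) ^ (i : ℕ) * (merge (bord f) i 0 z *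
        merge (bord f) i (Fin.last (q + 1)) z)) * ∑ k ∈ J, sgn n k (J.erase k) *
          pd n k (Phi n q (bord (merge (bord f) i)) (J.erase k)) (z, z) := by
          rw [Finset.mul_sum]
          exact Finset.sum_congr rfl fun j _ => by ring
      _ = 0 := by rw [this, mul_zero]
  simp only [← Finset.mul_sum] at hz0 ⊢
  rw [Finset.sum_congr rfl (fun j _ => Finset.mul_sum _ _ _), Finset.sum_comm,
    Finset.sum_eq_zero (fun i _ => hz0 i)]
  ring

theorem orderEmb_erase {n q : ℕ} (J : Finset (Fin n)) (hJ : J.card = q + 1) (c : Fin (q + 1))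
    (h : (J.erase (J.orderEmbOfFin hJ c)).card = q) (r : Fin q) :
    (J.erase (J.orderEmbOfFin hJ c)).orderEmbOfFin h r = J.orderEmbOfFin hJ (c.succAbove r) := by
  have := Finset.orderEmbOfFin_unique h (f := fun r => J.orderEmbOfFin hJ (c.succAbove r))
    (fun r => by
      refine Finset.mem_erase.2 ⟨fun e => ?_, Finset.orderEmbOfFin_mem _ _ _⟩
      exact Fin.succAbove_ne c r ((J.orderEmbOfFin hJ).injective e))
    ((J.orderEmbOfFin hJ).strictMono.comp (Fin.strictMono_succAbove c))
  exact (congrFun this r).symm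

theorem sgn_orderEmb {n q : ℕ} (J : Finset (Fin n)) (hJ : J.card = q + 1) (c : Fin (q + 1)) :
    sgn n (J.orderEmbOfFin hJ c) (J.erase (J.orderEmbOfFin hJ c)) = (-1) ^ (c : ℕ) := by
  unfold sgn
  congr 1
  have : (J.erase (J.orderEmbOfFin hJ c)).filter (fun i => i < J.orderEmbOfFin hJ c) =
      (Finset.Iio c).map (J.orderEmbOfFin hJ).toEmbedding := by
    ext i
    simp only [Finset.mem_filter, Finset.mem_erase, Finset.mem_map, Finset.mem_Iio]
    constructor
    · rintro ⟨⟨_, hi⟩, hlt⟩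
      have : i ∈ Set.range (J.orderEmbOfFin hJ) := by
        rw [Finset.range_orderEmbOfFin]; exact hi
      obtain ⟨a, rfl⟩ := this
      exact ⟨a, (J.orderEmbOfFin hJ).lt_iff_lt.1 hlt, rfl⟩
    · rintro ⟨a, ha, rfl⟩
      have := (J.orderEmbOfFin hJ).lt_iff_lt.2 ha
      exact ⟨⟨this.ne, Finset.orderEmbOfFin_mem _ _ _⟩, this⟩
  rw [this, Finset.card_map, Fin.card_Iio]

theorem main_aux {n : ℕ} {U : Set (Fin n → ℂ)} (hUopen : IsOpen U) (hUconv : Convex ℝ U)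
    {z : Fin n → ℂ} (hz : z ∈ U) (q : ℕ) :
    ∀ (f : Fin (q + 2) → ((Fin n → ℂ) → ℂ)), (∀ k, DifferentiableOn ℂ (f k) U) →
      (∀ (J : Finset (Fin n)) (hJ : J.card = q),
        Phi n q f J (z, z) =
          (q.factorial : ℂ)⁻¹ * (f 0 z * f (Fin.last (q + 1)) z) *
            Matrix.det (Matrix.of fun r c : Fin q =>
              pdU n (J.orderEmbOfFin hJ c) (f r.succ.castSucc) z)) ∧
      (∀ J : Finset (Fin n), J.card ≠ q → Phi n q f J (z, z) = 0) := by
  induction q with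
  | zero =>
    intro f hf
    refine ⟨fun J hJ => ?_, fun J hJ => ?_⟩
    · have : J = ∅ := Finset.card_eq_zero.1 hJ
      simp [Phi, ofFun, this]
    · have : J ≠ ∅ := fun h => hJ (by simp [h])
      simp [Phi, ofFun, this]
  | succ q ih =>
    intro f hf
    obtain ⟨ih1, ih2⟩ := ih (bord (merge (bord f) 0)) (bord_diff (merge_diff (bord_diff hf) 0))
    refine ⟨fun J hJ => ?_, fun J hJ => ?_⟩
    · rw [Phi_step hUopen hUconv q f hf J hz, Matrix.det_succ_row_zero]
      have hsum : ∑ j ∈ J, sgn n j (J.erase j) * (pdU n j (f 1) z *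
          Phi n q (bord (merge (bord f) 0)) (J.erase j) (z, z)) =
          ∑ c : Fin (q + 1), sgn n (J.orderEmbOfFin hJ c) (J.erase (J.orderEmbOfFin hJ c)) *
            (pdU n (J.orderEmbOfFin hJ c) (f 1) z *
          Phi n q (bord (merge (bord f) 0)) (J.erase (J.orderEmbOfFin hJ c)) (z, z)) := by
        have := Finset.map_orderEmbOfFin_univ J hJ
        conv_lhs => rw [← this]
        rw [Finset.sum_map]
        rw [this]
        rfl
      rw [hsum, hJ, Nat.factorial_succ]
      simp only [Finset.mul_sum]
      refine Finset.sum_congr rfl fun c _ => ?_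
      have hcard : (J.erase (J.orderEmbOfFin hJ c)).card = q := by
        rw [Finset.card_erase_of_mem (Finset.orderEmbOfFin_mem _ _ _), hJ]; rfl
      rw [sgn_orderEmb, ih1 _ hcard, bord_zero, bord_last]
      have hmat : (Matrix.of fun r c' : Fin q =>
          pdU n ((J.erase (J.orderEmbOfFin hJ c)).orderEmbOfFin hcard c')
            (bord (merge (bord f) 0) r.succ.castSucc) z) =
          (Matrix.of fun r c : Fin (q + 1) =>
            pdU n (J.orderEmbOfFin hJ c) (f r.succ.castSucc) z).submatrix
              Fin.succ c.succAbove := by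
        ext r c'
        simp only [Matrix.of_apply, Matrix.submatrix_apply]
        rw [orderEmb_erase, bord_mid, merge_zero_mid]
      rw [hmat]
      simp only [Matrix.of_apply, Pi.one_apply]
      have : f (Fin.succ (0 : Fin (q + 1))).castSucc = f 1 := rfl
      rw [this]
      push_cast
      rw [mul_inv]
      ring
    · rw [Phi_step hUopen hUconv q f hf J hz, Finset.sum_eq_zero, mul_zero, mul_zero]
      intro j hj
      rw [ih2, mul_zero, mul_zero]
      rw [Finset.card_erase_of_mem hj]
      have := Finset.card_pos.2 ⟨j, hj⟩
      omega

/-- For every `0 ≤ q ≤ n`, the restriction of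
`Φ^{-q}(f₀ ⊗ f₁ ⊗ … ⊗ f_{q+1})` to the diagonal is
`(1/q!) f₀(z) f_{q+1}(z) (Σ_j ∂f₁/∂z^j e^j) ∧ … ∧ (Σ_j ∂f_q/∂z^j e^j)`,
i.e. `(1/q!) f₀ f_{q+1} df₁ ∧ … ∧ df_q` — the Hochschild–Kostant–Rosenberg map.
In coefficients: the coefficient on `e^J` with `|J| = q` is the minor
`(1/q!) f₀(z) f_{q+1}(z) det((∂f_r/∂z^{j_c})(z))`, and the coefficients on `e^J`
with `|J| ≠ q` vanish. -/
theorem statement8 (n : ℕ) (hn : 1 ≤ n)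
    (U : Set (Fin n → ℂ)) (hUopen : IsOpen U) (hUconv : Convex ℝ U)
    (hUne : U.Nonempty)
    (q : ℕ) (hq : q ≤ n)
    (f : Fin (q + 2) → ((Fin n → ℂ) → ℂ))
    (hf : ∀ k, DifferentiableOn ℂ (f k) U) :
    ∀ z ∈ U,
      (∀ (J : Finset (Fin n)) (hJ : J.card = q),
        Phi n q f J (z, z) =
          (q.factorial : ℂ)⁻¹ * (f 0 z * f (Fin.last (q + 1)) z) *
            Matrix.det (Matrix.of fun r c : Fin q =>
              pdU n (J.orderIsoOfFin hJ c) (f r.succ.castSucc) z)) ∧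
      (∀ J : Finset (Fin n), J.card ≠ q → Phi n q f J (z, z) = 0) := by
  intro z hz
  obtain ⟨h1, h2⟩ := main_aux hUopen hUconv hz q f hf
  refine ⟨fun J hJ => ?_, h2⟩
  simpa using h1 J hJ

end TwistedKoszul
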